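/- Let n ≥ 2 and let Q ⊆ ℝⁿ be a real quadric surface. Then at least one connected component of ℝⁿ \ Q is convex if and only if there exists an affine isometry f : ℝⁿ → ℝⁿ such that f(Q) is one of the following sets, with all scalars a_i involved positive: (1) {x : a₁x₁² + ⋯ + a_k x_k² = 1} for some 1 ≤ k ≤ n; (2) {x : a₁x₁² − a₂x₂² − ⋯ − a_k x_k² = 1} for some 2 ≤ k ≤ n; (3) {x : x₁ = 0}; (4) {x : a₁x₁² − a₂x₂² − ⋯ − a_k x_k² = 0} for some 2 ≤ k ≤ n; (5) {x : a₁x₁² + ⋯ + a_{k−1} x_{k−1}² = x_k} for some 2 ≤ k ≤ n. -/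

import Mathlib

open Set Metric RealInnerProductSpace

noncomputable section

/-- Euclidean n-space. -/
abbrev En (n : ℕ) := EuclideanSpace ℝ (Fin n)

/-- A quadric surface in ℝⁿ: the zero set of a quadratic polynomial whose quadratic
part (given by a symmetric matrix) is not identically zero. -/
def IsQuadricSurface {n : ℕ} (Q : Set (En n)) : Prop :=
  ∃ (a : Matrix (Fin n) (Fin n) ℝ) (b : Fin n → ℝ) (c : ℝ),
    a.IsSymm ∧ a ≠ 0 ∧
    Q = {x : En n | (∑ i, ∑ k, a i k * x i * x k) + 2 * (∑ i, b i * x i) + c = 0}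

/-- A real quadric surface: a nonempty quadric surface. -/
def IsRealQuadricSurface {n : ℕ} (Q : Set (En n)) : Prop :=
  IsQuadricSurface Q ∧ Q.Nonempty

/-- The set of connected components of a subset `F` of a topological space. -/
def componentsIn {α : Type*} [TopologicalSpace α] (F : Set α) : Set (Set α) :=
  {C | ∃ x ∈ F, C = connectedComponentIn F x}

/-- A convex quadric: the frontier of a convex connected component of the complement
of a real quadric surface. -/
def IsConvexQuadric {n : ℕ} (S : Set (En n)) : Prop :=
  ∃ Q U : Set (En n), IsRealQuadricSurface Q ∧ U ∈ componentsIn Qᶜ ∧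
    Convex ℝ U ∧ S = frontier U

lemma zlt {n : ℕ} (hn : 2 ≤ n) : 0 < n := by omega

/-- The disjunction of the five canonical forms, for a set `S`. -/
def Canon {n : ℕ} (hn : 2 ≤ n) (S : Set (En n)) : Prop :=
  (∃ k : ℕ, 1 ≤ k ∧ k ≤ n ∧ ∃ a : Fin n → ℝ, (∀ i : Fin n, (i : ℕ) < k → 0 < a i) ∧
    S = {x : En n |
      ∑ i ∈ Finset.univ.filter (fun i : Fin n => (i : ℕ) < k), a i * x i ^ 2 = 1}) ∨
  (∃ k : ℕ, 2 ≤ k ∧ k ≤ n ∧ ∃ a : Fin n → ℝ, (∀ i : Fin n, (i : ℕ) < k → 0 < a i) ∧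
    S = {x : En n |
      a ⟨0, zlt hn⟩ * x ⟨0, zlt hn⟩ ^ 2 -
        ∑ i ∈ Finset.univ.filter (fun i : Fin n => 1 ≤ (i : ℕ) ∧ (i : ℕ) < k),
          a i * x i ^ 2 = 1}) ∨
  (S = {x : En n | x ⟨0, zlt hn⟩ = 0}) ∨
  (∃ k : ℕ, 2 ≤ k ∧ k ≤ n ∧ ∃ a : Fin n → ℝ, (∀ i : Fin n, (i : ℕ) < k → 0 < a i) ∧
    S = {x : En n |
      a ⟨0, zlt hn⟩ * x ⟨0, zlt hn⟩ ^ 2 -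
        ∑ i ∈ Finset.univ.filter (fun i : Fin n => 1 ≤ (i : ℕ) ∧ (i : ℕ) < k),
          a i * x i ^ 2 = 0}) ∨
  (∃ κ : Fin n, 1 ≤ (κ : ℕ) ∧ ∃ a : Fin n → ℝ, (∀ i : Fin n, (i : ℕ) < (κ : ℕ) → 0 < a i) ∧
    S = {x : En n |
      ∑ i ∈ Finset.univ.filter (fun i : Fin n => (i : ℕ) < (κ : ℕ)), a i * x i ^ 2 = x κ})

/-- Canonical form after an affine isometry. -/
def Target {n : ℕ} (hn : 2 ≤ n) (S : Set (En n)) : Prop :=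
  ∃ f : En n ≃ᵃⁱ[ℝ] En n, Canon hn (f '' S)

/-- Some component of the complement is convex. -/
def HasConv {n : ℕ} (S : Set (En n)) : Prop :=
  ∃ U ∈ componentsIn Sᶜ, Convex ℝ U

lemma target_of_image {n : ℕ} (hn : 2 ≤ n) (S : Set (En n)) (g : En n ≃ᵃⁱ[ℝ] En n)
    (h : Target hn (g '' S)) : Target hn S := by
  obtain ⟨f, hf⟩ := h
  refine ⟨g.trans f, ?_⟩
  rw [Set.image_image] at hf
  exact hf

lemma hasConv_image {n : ℕ} (S : Set (En n)) (g : En n ≃ᵃⁱ[ℝ] En n)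
    (h : HasConv S) : HasConv (g '' S) := by
  obtain ⟨U, ⟨x, hx, rfl⟩, hU⟩ := h
  refine ⟨g '' connectedComponentIn Sᶜ x, ⟨g x, ?_, ?_⟩, ?_⟩
  · rintro ⟨y, hy, hyx⟩
    exact hx (g.injective hyx ▸ hy)
  · have := g.toHomeomorph.image_connectedComponentIn (s := Sᶜ) hx
    have h2 : (g '' S)ᶜ = g '' Sᶜ := (Set.image_compl_eq g.bijective).symm
    rw [h2]
    exact this
  · exact hU.affine_image g.toAffineEquiv.toAffineMap

lemma hasConv_of_image {n : ℕ} (S : Set (En n)) (g : En n ≃ᵃⁱ[ℝ] En n)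
    (h : HasConv (g '' S)) : HasConv S := by
  have := hasConv_image _ g.symm h
  rw [Set.image_image] at this
  simpa using this

/-- Diagonal quadric with one linear term. -/
def PQ {n : ℕ} (l : Fin n → ℝ) (β : ℝ) (j : Fin n) (c : ℝ) : Set (En n) :=
  {x | ∑ i, l i * x i ^ 2 + β * x j + c = 0}

lemma PQ_scale {n : ℕ} (l : Fin n → ℝ) (β : ℝ) (j : Fin n) (c : ℝ) (d : ℝ) (hd : d ≠ 0) :
    PQ (fun i => d * l i) (d * β) j (d * c) = PQ l β j c := by
  ext x
  simp only [PQ, Set.mem_ofPred_eq]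
  have : ∑ i, d * l i * x i ^ 2 + d * β * x j + d * c
      = d * (∑ i, l i * x i ^ 2 + β * x j + c) := by
    rw [mul_add, mul_add, Finset.mul_sum]
    simp only [mul_assoc]
  rw [this]
  simp [hd]

lemma PQ_perm {n : ℕ} (hn : 2 ≤ n) (l : Fin n → ℝ) (β : ℝ) (j : Fin n) (c : ℝ)
    (τ : Equiv.Perm (Fin n))
    (h : Target hn (PQ (fun i => l (τ i)) β (τ.symm j) c)) : Target hn (PQ l β j c) := by
  refine target_of_image hn _
    (LinearIsometryEquiv.piLpCongrLeft 2 ℝ ℝ τ.symm).toAffineIsometryEquiv ?_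
  convert h using 1
  ext y
  simp only [Set.mem_image, LinearIsometryEquiv.coe_toAffineIsometryEquiv]
  have key : ∀ x : En n, (LinearIsometryEquiv.piLpCongrLeft 2 ℝ ℝ τ.symm x ∈
      PQ (fun i => l (τ i)) β (τ.symm j) c) ↔ x ∈ PQ l β j c := by
    intro x
    simp only [PQ, Set.mem_ofPred_eq, LinearIsometryEquiv.piLpCongrLeft_apply,
      Equiv.piCongrLeft'_apply, Equiv.symm_symm, Equiv.apply_symm_apply]
    rw [Equiv.sum_comp τ (fun i => l i * x i ^ 2)]
  constructor
  · rintro ⟨x, hx, rfl⟩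
    exact (key x).2 hx
  · intro hy
    refine ⟨(LinearIsometryEquiv.piLpCongrLeft 2 ℝ ℝ τ.symm).symm y, ?_,
      LinearIsometryEquiv.apply_symm_apply _ _⟩
    rw [← key, LinearIsometryEquiv.apply_symm_apply]
    exact hy

lemma PQ_neg {n : ℕ} (hn : 2 ≤ n) (l : Fin n → ℝ) (β : ℝ) (j : Fin n) (c : ℝ)
    (h : Target hn (PQ l (-β) j c)) : Target hn (PQ l β j c) := by
  refine target_of_image hn _
    (LinearIsometryEquiv.neg ℝ (E := En n)).toAffineIsometryEquiv ?_
  convert h using 1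
  ext y
  simp only [LinearIsometryEquiv.coe_toAffineIsometryEquiv, LinearIsometryEquiv.coe_neg,
    Set.image_neg_eq_neg, Set.mem_neg, PQ, Set.mem_ofPred_eq, PiLp.neg_apply]
  simp

/-- Diagonalisation of a symmetric operator with a basis adapted to a kernel vector. -/
lemma adapted_basis {n : ℕ} (T : En n →ₗ[ℝ] En n) (hT : T.IsSymmetric) (w : En n)
    (hw : w ≠ 0) (hTw : T w = 0) :
    ∃ (v : OrthonormalBasis (Fin n) ℝ (En n)) (l : Fin n → ℝ) (j : Fin n) (β : ℝ),
      (∀ i, T (v i) = l i • v i) ∧ β ≠ 0 ∧ l j = 0 ∧ w = β • v j := by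
  obtain ⟨μ, hμ⟩ := (Module.End.finite_hasEigenvalue T).infinite_compl.nonempty
  have hμ' : ∀ r, T r = μ • r → r = 0 := by
    intro r hr
    by_contra h0
    exact hμ (Module.End.hasEigenvalue_of_hasEigenvector (Module.End.hasEigenvector_iff.2
      ⟨Module.End.mem_eigenspace_iff.2 hr, h0⟩))
  have hww : ⟪w, w⟫ ≠ 0 := by simpa using hw
  set M : ℝ := μ / ⟪w, w⟫ with hM
  let T' : En n →ₗ[ℝ] En n := T + M • ((innerₛₗ ℝ w).smulRight w)
  have hT'a : ∀ x, T' x = T x + (M * ⟪w, x⟫) • w := by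
    intro x
    simp [T', smul_smul]
  have hT' : T'.IsSymmetric := by
    intro x y
    rw [hT'a, hT'a, inner_add_left, inner_add_right, hT x y, inner_smul_left, inner_smul_right,
      real_inner_comm x w]
    simp
    ring
  have hfr : Module.finrank ℝ (En n) = n := by simp
  set v := hT'.eigenvectorBasis hfr with hv
  set l := hT'.eigenvalues hfr with hl
  have hvl : ∀ i, T' (v i) = l i • v i := fun i => hT'.apply_eigenvectorBasis hfr i
  have hT'w : T' w = μ • w := by
    rw [hT'a, hTw, hM]
    simp only [zero_add]
    rw [div_mul_cancel₀ _ hww]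
  obtain ⟨j, hj⟩ : ∃ j, ⟪w, v j⟫ ≠ 0 := by
    by_contra hcon
    push Not at hcon
    apply hww
    rw [← v.sum_inner_mul_inner w w]
    simp [hcon]
  have hlj : l j = μ := by
    have h1 := hT' w (v j)
    rw [hT'w, hvl, inner_smul_left, inner_smul_right] at h1
    simp only [conj_trivial] at h1
    exact (mul_right_cancel₀ hj h1).symm
  set α : ℝ := ⟪w, v j⟫ / ⟪w, w⟫ with hα
  have hα0 : α ≠ 0 := div_ne_zero hj hww
  have hr : v j - α • w = 0 := by
    apply hμ'
    rw [map_sub, map_smul, hTw, smul_zero, sub_zero]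
    have h2 := hvl j
    rw [hT'a, hlj] at h2
    rw [smul_sub, ← h2, smul_smul]
    have : M * ⟪w, v j⟫ = μ * α := by rw [hM, hα]; ring
    rw [this]; simp
  have hwv : w = α⁻¹ • v j := by
    rw [sub_eq_zero.1 hr, smul_smul, inv_mul_cancel₀ hα0, one_smul]
  refine ⟨v, Function.update l j 0, j, α⁻¹, ?_, inv_ne_zero hα0, by simp, hwv⟩
  intro i
  by_cases hij : i = j
  · subst hij
    rw [sub_eq_zero.1 hr]
    simp [hTw]
  · have h3 : ⟪w, v i⟫ = 0 := by
      rw [hwv, inner_smul_left, v.orthonormal.2 (Ne.symm hij)]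
      simp
    have h4 := hvl i
    rw [hT'a, h3] at h4
    simpa [hij] using h4

lemma quad_diag {n : ℕ} (T : En n →ₗ[ℝ] En n) (hT : T.IsSymmetric)
    (v : OrthonormalBasis (Fin n) ℝ (En n)) (l : Fin n → ℝ) (h : ∀ i, T (v i) = l i • v i)
    (x : En n) : ⟪T x, x⟫ = ∑ i, l i * (v.repr x i) ^ 2 := by
  rw [← v.sum_inner_mul_inner (T x) x]
  refine Finset.sum_congr rfl fun i _ => ?_
  rw [hT x (v i), h, inner_smul_right, v.repr_apply_apply, real_inner_comm]
  ring

/-- Normal form of a quadric. -/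
lemma normal_form {n : ℕ} (hn : 2 ≤ n) (Q : Set (En n)) (hQ : IsQuadricSurface Q) :
    ∃ (g : En n ≃ᵃⁱ[ℝ] En n) (l : Fin n → ℝ) (β : ℝ) (j : Fin n) (c : ℝ),
      g '' Q = PQ l β j c ∧ (β = 0 ∨ (β ≠ 0 ∧ c = 0 ∧ l j = 0)) := by
  obtain ⟨a, b, c, ha, -, rfl⟩ := hQ
  set T : En n →ₗ[ℝ] En n := Matrix.toEuclideanLin a with hTdef
  have hT : T.IsSymmetric := by
    rw [hTdef, Matrix.isSymmetric_toEuclideanLin_iff]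
    rw [Matrix.IsHermitian, Matrix.conjTranspose_eq_transpose_of_trivial]
    exact ha
  set B : En n := WithLp.toLp 2 b with hB
  have hq : ∀ x : En n, (∑ i, ∑ k, a i k * x i * x k) + 2 * (∑ i, b i * x i) + c
      = ⟪T x, x⟫ + 2 * ⟪B, x⟫ + c := by
    intro x
    congr 2
    · simp only [hTdef, Matrix.toLpLin_apply, PiLp.inner_apply, Matrix.mulVec, dotProduct]
      refine Finset.sum_congr rfl fun i _ => ?_
      simp only [RCLike.inner_apply, conj_trivial]
      rw [Finset.mul_sum]
      refine Finset.sum_congr rfl fun k _ => ?_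
      ring
    · simp only [hB, PiLp.inner_apply, RCLike.inner_apply, conj_trivial]
      congr 1
      refine Finset.sum_congr rfl fun i _ => ?_
      ring
  have img : ∀ (v : OrthonormalBasis (Fin n) ℝ (En n)) (u : En n) (l : Fin n → ℝ) (β : ℝ)
      (j : Fin n) (c' : ℝ),
      (∀ x, ⟪T (x + u), x + u⟫ + 2 * ⟪B, x + u⟫ + c
        = ∑ i, l i * (v.repr x i) ^ 2 + β * v.repr x j + c') →
      ∃ g : En n ≃ᵃⁱ[ℝ] En n, g '' {x : En n | (∑ i, ∑ k, a i k * x i * x k)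
        + 2 * (∑ i, b i * x i) + c = 0} = PQ l β j c' := by
    intro v u l β j c' h
    refine ⟨(AffineIsometryEquiv.vaddConst ℝ u).symm.trans v.repr.toAffineIsometryEquiv, ?_⟩
    simp only [hq]
    ext y
    constructor
    · rintro ⟨x, hx, rfl⟩
      have := h (x - u)
      simp only [sub_add_cancel] at this
      simp only [Set.mem_ofPred_eq] at hx
      rw [hx] at this
      exact this.symm
    · intro hy
      refine ⟨v.repr.symm y + u, ?_, ?_⟩
      · simp only [Set.mem_ofPred_eq]
        rw [h]
        simpa [PQ] using hy
      · simp
  obtain ⟨z, ⟨u', rfl⟩, w, hw, hBw⟩ := Submodule.exists_add_mem_mem_orthogonal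
    (K := LinearMap.range T) B
  rw [hT.orthogonal_range] at hw
  have hTw : T w = 0 := hw
  have hwT : ∀ x, ⟪w, T x⟫ = 0 := by
    intro x
    rw [← hT, hTw, inner_zero_left]
  by_cases hw0 : w = 0
  · have hfr : Module.finrank ℝ (En n) = n := by simp
    obtain ⟨g, hg⟩ := img (hT.eigenvectorBasis hfr) (-u') (hT.eigenvalues hfr) 0 ⟨0, by omega⟩
      (c - ⟪T u', u'⟫) (by
        intro x
        rw [← quad_diag T hT _ (hT.eigenvalues hfr) (fun i => hT.apply_eigenvectorBasis hfr i), hBw, hw0]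
        simp only [map_add, map_neg, inner_add_left, inner_add_right, inner_neg_left,
          inner_neg_right, inner_zero_left]
        rw [hT x u', real_inner_comm (T u') x]
        ring)
    exact ⟨g, _, _, _, _, hg, Or.inl rfl⟩
  · obtain ⟨v, l, j, β, hv, hβ, hlj, hwv⟩ := adapted_basis T hT w hw0 hTw
    have hww : ⟪w, w⟫ ≠ 0 := by simpa using hw0
    set c1 := c - ⟪T u', u'⟫ - 2 * ⟪w, u'⟫ with hc1
    obtain ⟨s, hs⟩ : ∃ s : ℝ, 2 * s * ⟪w, w⟫ = c1 := ⟨c1 / (2 * ⟪w, w⟫), by field_simp⟩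
    obtain ⟨g, hg⟩ := img v (-u' - s • w) l (2 * β) j 0 (by
        intro x
        rw [← quad_diag T hT _ _ hv, hBw]
        have e1 : β * v.repr x j = ⟪w, x⟫ := by
          rw [hwv, inner_smul_left, v.repr_apply_apply]
          simp
        rw [mul_assoc, e1]
        simp only [map_add, map_neg, map_smul, hTw, smul_zero, sub_eq_add_neg,
          inner_add_left, inner_add_right, inner_neg_left,
          inner_neg_right, inner_smul_right, inner_zero_left, neg_zero]
        have e2 : ⟪T x, w⟫ = 0 := by rw [real_inner_comm]; exact hwT x
        have e3 : ⟪T u', w⟫ = 0 := by rw [real_inner_comm]; exact hwT u'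
        have e4 : ⟪T x, u'⟫ = ⟪T u', x⟫ := by rw [hT x u', real_inner_comm]
        rw [e2, e3, e4]
        linarith)
    exact ⟨g, _, _, _, _, hg, Or.inr ⟨by simpa using hβ, rfl, hlj⟩⟩

/-- The diagonal quadratic form. -/
def qf {n : ℕ} (l : Fin n → ℝ) (x : En n) : ℝ := ∑ i, l i * x i ^ 2

lemma qf_smul {n : ℕ} (l : Fin n → ℝ) (t : ℝ) (x : En n) : qf l (t • x) = t ^ 2 * qf l x := by
  simp only [qf, PiLp.smul_apply, smul_eq_mul, Finset.mul_sum]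
  exact Finset.sum_congr rfl fun i _ => by ring

lemma qf_add {n : ℕ} (l : Fin n → ℝ) (x y : En n) :
    qf l (x + y) = qf l x + 2 * ∑ i, l i * x i * y i + qf l y := by
  simp only [qf, PiLp.add_apply, Finset.mul_sum, ← Finset.sum_add_distrib]
  exact Finset.sum_congr rfl fun i _ => by ring

lemma qf_single {n : ℕ} (l : Fin n → ℝ) (i : Fin n) (t : ℝ) :
    qf l (EuclideanSpace.single i t) = l i * t ^ 2 := by
  simp [qf, PiLp.single_apply]

lemma qf_add_single {n : ℕ} (l : Fin n → ℝ) (x : En n) (i : Fin n) (t : ℝ) :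
    qf l (x + EuclideanSpace.single i t) = qf l x + l i * (2 * x i * t + t ^ 2) := by
  rw [qf_add, qf_single]
  simp [PiLp.single_apply]
  ring

lemma qf_continuous {n : ℕ} (l : Fin n → ℝ) : Continuous (qf l) := by
  unfold qf
  fun_prop

/-- A component absorbs connected subsets. -/
lemma comp_absorb {n : ℕ} {S U : Set (En n)} (hU : U ∈ componentsIn Sᶜ) {x : En n}
    (hx : x ∈ U) {K : Set (En n)} (hK : IsPreconnected K) (hxK : x ∈ K) (hKS : K ⊆ Sᶜ) :
    K ⊆ U := by
  obtain ⟨y, hy, rfl⟩ := hU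
  rw [connectedComponentIn_eq hx]
  exact hK.subset_connectedComponentIn hxK hKS

lemma comp_segment {n : ℕ} {S U : Set (En n)} (hU : U ∈ componentsIn Sᶜ) {x y : En n}
    (hx : x ∈ U) (h : ∀ t : ℝ, 0 ≤ t → t ≤ 1 → x + t • (y - x) ∉ S) : y ∈ U := by
  refine comp_absorb hU hx (convex_segment (𝕜 := ℝ) x y).isPreconnected
    (left_mem_segment ℝ x y) ?_ (right_mem_segment ℝ x y)
  rw [segment_eq_image']
  rintro _ ⟨t, ht, rfl⟩
  exact h t ht.1 ht.2

lemma comp_subset {n : ℕ} {S U : Set (En n)} (hU : U ∈ componentsIn Sᶜ) : U ⊆ Sᶜ := by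
  obtain ⟨y, hy, rfl⟩ := hU
  exact connectedComponentIn_subset _ _

lemma comp_nonempty {n : ℕ} {S U : Set (En n)} (hU : U ∈ componentsIn Sᶜ) : U.Nonempty := by
  obtain ⟨y, hy, rfl⟩ := hU
  exact ⟨y, mem_connectedComponentIn hy⟩

lemma comp_preconnected {n : ℕ} {S U : Set (En n)} (hU : U ∈ componentsIn Sᶜ) :
    IsPreconnected U := by
  obtain ⟨y, hy, rfl⟩ := hU
  exact isPreconnected_connectedComponentIn

/-- `c ≤ 0`: at most one positive coefficient. -/
lemma central_nonpos {n : ℕ} (l : Fin n → ℝ) (c : ℝ) (hc : c ≤ 0) {S U : Set (En n)}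
    (hS : ∀ x, x ∈ S ↔ qf l x + c = 0)
    (hU : U ∈ componentsIn Sᶜ) (hconv : Convex ℝ U) (hpos : ∀ x ∈ U, 0 < qf l x + c)
    (i j : Fin n) (hij : i ≠ j) (hi : 0 < l i) (hj : 0 < l j) : False := by
  obtain ⟨x, hx⟩ := comp_nonempty hU
  have hqx := hpos x hx
  have hqx0 : 0 < qf l x := by linarith
  -- a vector in the positive plane, orthogonal to x
  obtain ⟨e, he1, he2⟩ : ∃ e : En n, ∑ k, l k * x k * e k = 0 ∧ 0 < qf l e := by
    by_cases h0 : x i = 0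
    · refine ⟨EuclideanSpace.single i 1, ?_, ?_⟩
      · simp [PiLp.single_apply, h0]
      · rw [qf_single]; linarith
    · refine ⟨EuclideanSpace.single i (l j * x j) + EuclideanSpace.single j (-(l i * x i)), ?_, ?_⟩
      · simp [PiLp.single_apply, mul_add, Finset.sum_add_distrib]
        ring
      · rw [qf_add_single, qf_single]
        have : (EuclideanSpace.single i (l j * x j) : En n) j = 0 := by
          simp [hij.symm]
        rw [this]
        have h1 : 0 ≤ l i * (l j * x j) ^ 2 := by positivity
        have h2 : 0 < l j * (-(l i * x i)) ^ 2 := by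
          have : l i * x i ≠ 0 := mul_ne_zero hi.ne' h0
          have := neg_ne_zero.2 this
          positivity
        linarith
  set s := Real.sqrt (qf l x / qf l e) with hs
  have hs2 : s ^ 2 * qf l e = qf l x := by
    rw [hs, Real.sq_sqrt (by positivity)]
    field_simp
  have hpath : ∀ θ : ℝ, qf l (Real.cos θ • x + Real.sin θ • (s • e)) = qf l x := by
    intro θ
    rw [qf_add, qf_smul, qf_smul, qf_smul, hs2]
    have : ∑ k, l k * (Real.cos θ • x) k * (Real.sin θ • (s • e)) k
        = Real.cos θ * Real.sin θ * s * ∑ k, l k * x k * e k := by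
      rw [Finset.mul_sum]
      refine Finset.sum_congr rfl fun k _ => ?_
      simp only [PiLp.smul_apply, smul_eq_mul]
      ring
    rw [this, he1]
    have := Real.sin_sq_add_cos_sq θ
    linear_combination qf l x * this
  have hK : IsPreconnected (Set.range fun θ : ℝ => Real.cos θ • x + Real.sin θ • (s • e)) :=
    isPreconnected_range (by fun_prop)
  have hsub := comp_absorb hU hx hK ⟨0, by simp⟩ (by
    rintro _ ⟨θ, rfl⟩ hmem
    rw [hS, hpath] at hmem
    linarith)
  have hnx : -x ∈ U := hsub ⟨Real.pi, by simp⟩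
  have h0 : (0 : En n) ∈ U := by
    have := hconv hx hnx (a := 1 / 2) (b := 1 / 2) (by norm_num) (by norm_num) (by norm_num)
    simpa using this
  have := hpos 0 h0
  simp [qf] at this
  linarith

/-- `c > 0`: no two coefficients of opposite signs. -/
lemma central_pos {n : ℕ} (l : Fin n → ℝ) (c : ℝ) (hc : 0 < c) {S U : Set (En n)}
    (hS : ∀ x, x ∈ S ↔ qf l x + c = 0)
    (hU : U ∈ componentsIn Sᶜ) (hconv : Convex ℝ U) (hpos : ∀ x ∈ U, 0 < qf l x + c)
    (i j : Fin n) (hi : l i < 0) (hj : 0 < l j) : False := by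
  have hij : i ≠ j := by rintro rfl; linarith
  have key : ∀ x : En n, 0 < qf l x + c → ∀ t : ℝ, 0 ≤ t → t ≤ 1 → 0 < qf l (t • x) + c := by
    intro x hx t ht0 ht1
    rw [qf_smul]
    have h1 : t ^ 2 ≤ 1 := by nlinarith
    have h2 : 0 ≤ t ^ 2 := sq_nonneg t
    rcases le_total 0 (qf l x) with h | h
    · positivity
    · nlinarith
  obtain ⟨x, hx⟩ := comp_nonempty hU
  have h0 : (0 : En n) ∈ U := by
    refine comp_segment hU hx fun t ht0 ht1 hmem => ?_
    have e : x + t • (0 - x) = (1 - t) • x := by module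
    rw [e, hS] at hmem
    have := key x (hpos x hx) (1 - t) (by linarith) (by linarith)
    linarith
  have hall : ∀ x : En n, 0 < qf l x + c → x ∈ U := by
    intro y hy
    refine comp_segment hU h0 fun t ht0 ht1 hmem => ?_
    have e : (0 : En n) + t • (y - 0) = t • y := by module
    rw [e, hS] at hmem
    have := key y hy t ht0 ht1
    linarith
  obtain ⟨s, hs⟩ : ∃ s : ℝ, l i * s ^ 2 + c = 0 :=
    ⟨Real.sqrt (c / -l i), by
      rw [Real.sq_sqrt (div_nonneg hc.le (by linarith))]
      have : l i ≠ 0 := hi.ne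
      field_simp
      simp⟩
  have hp : ∀ t : ℝ, qf l (EuclideanSpace.single i s + EuclideanSpace.single j t) + c
      = l j * t ^ 2 := by
    intro t
    rw [qf_add_single, qf_single]
    have : (EuclideanSpace.single i s : En n) j = 0 := by
      simp [hij.symm]
    rw [this]
    linear_combination hs
  have m1 := hall (EuclideanSpace.single i s + EuclideanSpace.single j 1) (by
    rw [hp]; linarith)
  have m2 := hall (EuclideanSpace.single i s + EuclideanSpace.single j (-1)) (by
    rw [hp]; linarith)
  have m3 := hconv m1 m2 (a := 1 / 2) (b := 1 / 2) (by norm_num) (by norm_num) (by norm_num)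
  have e : (1 / 2 : ℝ) • (EuclideanSpace.single i s + EuclideanSpace.single j 1 : En n)
      + (1 / 2 : ℝ) • (EuclideanSpace.single i s + EuclideanSpace.single j (-1) : En n)
      = EuclideanSpace.single i s + EuclideanSpace.single j 0 := by
    ext k
    simp [PiLp.single_apply]
    split_ifs <;> ring
  rw [e] at m3
  have := hpos _ m3
  rw [hp] at this
  simp at this

/-- Parabolic case: no positive coefficient on the positive side. -/
lemma parabolic {n : ℕ} (l : Fin n → ℝ) (β : ℝ) (hβ : β ≠ 0) (j : Fin n) (hlj : l j = 0)
    {S U : Set (En n)}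
    (hS : ∀ x, x ∈ S ↔ qf l x + β * x j = 0)
    (hU : U ∈ componentsIn Sᶜ) (hconv : Convex ℝ U) (hpos : ∀ x ∈ U, 0 < qf l x + β * x j)
    (i : Fin n) (hi : 0 < l i) : False := by
  have hij : i ≠ j := by rintro rfl; linarith
  have hval : ∀ (x : En n) (s r : ℝ),
      qf l (x + EuclideanSpace.single i s + EuclideanSpace.single j (r / β))
        + β * (x + EuclideanSpace.single i s + EuclideanSpace.single j (r / β) : En n) j
      = (qf l x + β * x j) + l i * (2 * x i * s + s ^ 2) + r := by
    intro x s r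
    rw [qf_add_single, qf_add_single, hlj]
    simp [hij.symm]
    field_simp
    ring
  obtain ⟨x, hx⟩ := comp_nonempty hU
  have hqx := hpos x hx
  set g := qf l x + β * x j with hg
  set T := l i * x i ^ 2 with hT
  have hT0 : 0 ≤ T := by positivity
  -- segments in the (i,j)-plane
  have seg : ∀ s r s' r' : ℝ,
      x + EuclideanSpace.single i s + EuclideanSpace.single j (r / β) ∈ U →
      (∀ t : ℝ, 0 ≤ t → t ≤ 1 →
        0 < g + l i * (2 * x i * (s + t * (s' - s)) + (s + t * (s' - s)) ^ 2)
          + (r + t * (r' - r))) →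
      x + EuclideanSpace.single i s' + EuclideanSpace.single j (r' / β) ∈ U := by
    intro s r s' r' hmem h
    refine comp_segment hU hmem fun t ht0 ht1 hm => ?_
    have e : x + EuclideanSpace.single i s + EuclideanSpace.single j (r / β)
        + t • (x + EuclideanSpace.single i s' + EuclideanSpace.single j (r' / β)
          - (x + EuclideanSpace.single i s + EuclideanSpace.single j (r / β)))
        = x + EuclideanSpace.single i (s + t * (s' - s))
          + EuclideanSpace.single j ((r + t * (r' - r)) / β) := by
      ext k
      simp [PiLp.single_apply]
      split_ifs <;> field_simp <;> ring
    rw [e, hS, hval] at hm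
    have := h t ht0 ht1
    linarith
  have p0 : x + EuclideanSpace.single i 0 + EuclideanSpace.single j (0 / β) ∈ U := by
    convert hx using 1
    ext k
    simp [PiLp.single_apply]
  have p1 := seg 0 0 0 T p0 (by
    intro t ht0 ht1
    have := mul_nonneg ht0 hT0
    simp
    linarith)
  have p2 : ∀ s, x + EuclideanSpace.single i s + EuclideanSpace.single j (T / β) ∈ U := by
    intro s
    refine seg 0 T s T p1 fun t ht0 ht1 => ?_
    have : 0 ≤ l i * (x i + t * s) ^ 2 := by positivity
    rw [hT]
    ring_nf at this ⊢
    linarith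
  have p3 : ∀ s, 0 < l i * (2 * x i * s + s ^ 2) →
      x + EuclideanSpace.single i s + EuclideanSpace.single j (-g / β) ∈ U := by
    intro s hs
    refine seg s T s (-g) (p2 s) fun t ht0 ht1 => ?_
    simp only [sub_self, mul_zero, add_zero]
    have : 0 ≤ (1 - t) * (g + T) := mul_nonneg (by linarith) (by linarith)
    nlinarith
  set s := 2 * |x i| + 1 with hs
  have hs0 : 0 < s := by positivity
  have m1 := p3 s (by
    have : 0 < 2 * x i + s := by
      have := neg_abs_le (x i)
      rw [hs]; linarith
    have : 0 < l i * (s * (2 * x i + s)) := by positivity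
    linarith)
  have m2 := p3 (-s) (by
    have : 0 < s - 2 * x i := by
      have := le_abs_self (x i)
      rw [hs]; linarith
    have : 0 < l i * (s * (s - 2 * x i)) := by positivity
    linarith)
  have m3 := hconv m1 m2 (a := 1 / 2) (b := 1 / 2) (by norm_num) (by norm_num) (by norm_num)
  have e : (1 / 2 : ℝ) • (x + EuclideanSpace.single i s + EuclideanSpace.single j (-g / β) : En n)
      + (1 / 2 : ℝ) • (x + EuclideanSpace.single i (-s) + EuclideanSpace.single j (-g / β) : En n)
      = x + EuclideanSpace.single i 0 + EuclideanSpace.single j (-g / β) := by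
    ext k
    simp [PiLp.single_apply]
    split_ifs <;> ring
  rw [e] at m3
  have := hpos _ m3
  rw [hval] at this
  simp only [mul_zero] at this
  norm_num at this
  linarith

lemma target_refl {n : ℕ} (hn : 2 ≤ n) (S : Set (En n)) (h : Canon hn S) : Target hn S := by
  refine ⟨AffineIsometryEquiv.refl ℝ _, ?_⟩
  simpa using h

lemma lower_k {n : ℕ} (g : Fin n → ℕ) (hg : Monotone g) (m : ℕ) :
    ∃ k ≤ n, ∀ i, g i ≤ m ↔ (i : ℕ) < k := by
  classical
  have hex : ∃ k, k = n ∨ ∃ h : k < n, m < g ⟨k, h⟩ := ⟨n, Or.inl rfl⟩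
  have hmin : Nat.find hex ≤ n := Nat.find_min' hex (Or.inl rfl)
  refine ⟨Nat.find hex, hmin, fun i => ⟨fun h => ?_, fun h => ?_⟩⟩
  · by_contra hcon
    push Not at hcon
    rcases Nat.find_spec hex with h1 | ⟨h1, h2⟩
    · have := i.2
      omega
    · have := hg (show (⟨Nat.find hex, h1⟩ : Fin n) ≤ i from hcon)
      omega
  · have := Nat.find_min hex h
    push Not at this
    exact this.2 i.2

/-- Assembly: form (1). -/
lemma asm1 {n : ℕ} (hn : 2 ≤ n) (l : Fin n → ℝ) (j : Fin n) (hl : ∀ i, 0 ≤ l i)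
    (hne : ∃ i, 0 < l i) : Target hn (PQ l 0 j (-1)) := by
  classical
  set key : Fin n → ℕ := fun i => if 0 < l i then 0 else 1 with hkey
  set τ := Tuple.sort key with hτ
  obtain ⟨k, hkn, hk⟩ := lower_k (key ∘ τ) (Tuple.monotone_sort key) 0
  have hk' : ∀ i, 0 < l (τ i) ↔ (i : ℕ) < k := by
    intro i
    rw [← hk]
    simp only [hkey, Function.comp]
    split_ifs with h <;> simp [h]
  apply PQ_perm hn l 0 j (-1) τ
  apply target_refl
  refine Or.inl ⟨k, ?_, hkn, fun i => l (τ i), fun i hi => (hk' i).2 hi, ?_⟩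
  · obtain ⟨i, hi⟩ := hne
    have := (hk' (τ.symm i)).1 (by simpa using hi)
    omega
  · ext x
    simp only [PQ, Set.mem_ofPred_eq]
    have : ∑ i ∈ Finset.univ.filter (fun i : Fin n => (i : ℕ) < k), l (τ i) * x i ^ 2
        = ∑ i, l (τ i) * x i ^ 2 := by
      refine Finset.sum_subset (Finset.subset_univ _) fun i _ hi => ?_
      simp only [Finset.mem_filter, Finset.mem_univ, true_and] at hi
      rw [← hk'] at hi
      have : l (τ i) = 0 := le_antisymm (not_lt.1 hi) (hl _)
      rw [this, zero_mul]
    rw [this]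
    constructor <;> intro h <;> linarith

/-- Assembly: forms (2), (3), (4). -/
lemma asm2 {n : ℕ} (hn : 2 ≤ n) (l : Fin n → ℝ) (j : Fin n) (c : ℝ) (hc : c = 0 ∨ c = 1)
    (i0 : Fin n) (h0 : 0 < l i0) (hl : ∀ i, i ≠ i0 → l i ≤ 0) :
    Target hn (PQ l 0 j (-c)) := by
  classical
  set key : Fin n → ℕ := fun i => if i = i0 then 0 else if l i < 0 then 1 else 2 with hkey
  set τ := Tuple.sort key with hτ
  have hmono : Monotone (key ∘ τ) := Tuple.monotone_sort key
  obtain ⟨k, hkn, hk⟩ := lower_k (key ∘ τ) hmono 1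
  set z : Fin n := ⟨0, by omega⟩ with hz
  have hτz : τ z = i0 := by
    have h1 : key (τ z) ≤ key (τ (τ.symm i0)) := hmono (show z ≤ τ.symm i0 from Nat.zero_le _)
    rw [Equiv.apply_symm_apply] at h1
    simp only [hkey, if_true] at h1
    by_contra hcon
    rw [if_neg hcon] at h1
    split_ifs at h1 <;> omega
  have hk' : ∀ i, i ≠ z → (l (τ i) < 0 ↔ (i : ℕ) < k) := by
    intro i hi
    have : τ i ≠ i0 := by
      rw [← hτz]
      exact fun h => hi (τ.injective h)
    rw [← hk]
    simp only [hkey, Function.comp, if_neg this]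
    split_ifs with h <;> simp [h]
  have hkz : 0 < k := by
    have : (z : ℕ) < k := (hk z).1 (by simp [hkey, hτz])
    exact this
  apply PQ_perm hn l 0 j (-c) τ
  apply target_refl
  have hsum : ∀ x : En n, ∑ i, l (τ i) * x i ^ 2 = |l (τ z)| * x z ^ 2 -
      ∑ i ∈ Finset.univ.filter (fun i : Fin n => 1 ≤ (i : ℕ) ∧ (i : ℕ) < k),
        |l (τ i)| * x i ^ 2 := by
    intro x
    rw [← Finset.add_sum_erase _ _ (Finset.mem_univ z), hτz, abs_of_pos h0, sub_eq_add_neg,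
      ← Finset.sum_neg_distrib]
    congr 1
    symm
    have : ∀ i ∈ Finset.univ.filter (fun i : Fin n => 1 ≤ (i : ℕ) ∧ (i : ℕ) < k),
        -(|l (τ i)| * x i ^ 2) = l (τ i) * x i ^ 2 := by
      intro i hi
      simp only [Finset.mem_filter, Finset.mem_univ, true_and] at hi
      have hiz : i ≠ z := by
        rintro rfl
        simp [hz] at hi
      rw [abs_of_neg ((hk' i hiz).2 hi.2)]
      ring
    rw [Finset.sum_congr rfl this]
    refine Finset.sum_subset ?_ ?_
    · intro i hi
      simp only [Finset.mem_filter, Finset.mem_univ, true_and] at hi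
      refine Finset.mem_erase.2 ⟨?_, Finset.mem_univ _⟩
      rintro rfl
      simp [hz] at hi
    · intro i hi1 hi2
      have hiz := (Finset.mem_erase.1 hi1).1
      simp only [Finset.mem_filter, Finset.mem_univ, true_and] at hi2
      have hi3 : 1 ≤ (i : ℕ) := by
        rcases Nat.eq_zero_or_pos (i : ℕ) with h | h
        · exact absurd (Fin.ext h) hiz
        · exact h
      have h4 : ¬ l (τ i) < 0 := by
        rw [hk' i hiz]
        exact fun h => hi2 ⟨hi3, h⟩
      have h5 : τ i ≠ i0 := by
        rw [← hτz]
        exact fun h => hiz (τ.injective h)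
      have : l (τ i) = 0 := le_antisymm (hl _ h5) (not_lt.1 h4)
      rw [this, zero_mul]
  have hapos : ∀ i : Fin n, (i : ℕ) < k → 0 < |l (τ i)| := by
    intro i hi
    rw [abs_pos]
    by_cases hiz : i = z
    · rw [hiz, hτz]; exact h0.ne'
    · exact ((hk' i hiz).2 hi).ne
  by_cases hk2 : 2 ≤ k
  · rcases hc with rfl | rfl
    · refine Or.inr (Or.inr (Or.inr (Or.inl ⟨k, hk2, hkn, fun i => |l (τ i)|, hapos, ?_⟩)))
      ext x
      simp only [PQ, Set.mem_ofPred_eq]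
      rw [hsum]
      constructor <;> intro h <;> linarith
    · refine Or.inr (Or.inl ⟨k, hk2, hkn, fun i => |l (τ i)|, hapos, ?_⟩)
      ext x
      simp only [PQ, Set.mem_ofPred_eq]
      rw [hsum]
      constructor <;> intro h <;> linarith
  · have hk1 : k = 1 := by omega
    subst hk1
    have hsum' : ∀ x : En n, ∑ i, l (τ i) * x i ^ 2 = |l (τ z)| * x z ^ 2 := by
      intro x
      rw [hsum, Finset.sum_eq_zero, sub_zero]
      intro i hi
      simp only [Finset.mem_filter, Finset.mem_univ, true_and] at hi
      omega
    have hz0 := hapos z hkz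
    rcases hc with rfl | rfl
    · refine Or.inr (Or.inr (Or.inl ?_))
      ext x
      simp only [PQ, Set.mem_ofPred_eq]
      rw [hsum']
      simp [hz0.ne', ← hz]
    · refine Or.inl ⟨1, le_refl _, by omega, fun i => |l (τ i)|, hapos, ?_⟩
      ext x
      simp only [PQ, Set.mem_ofPred_eq]
      rw [hsum']
      have : Finset.univ.filter (fun i : Fin n => (i : ℕ) < 1) = {z} := by
        ext i
        simp [Fin.ext_iff, hz]
      rw [this, Finset.sum_singleton]
      constructor <;> intro h <;> linarith

/-- Assembly: form (5) (or (3)). -/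
lemma asm5 {n : ℕ} (hn : 2 ≤ n) (l : Fin n → ℝ) (j : Fin n) (hl : ∀ i, 0 ≤ l i)
    (hlj : l j = 0) : Target hn (PQ l (-1) j 0) := by
  classical
  set key : Fin n → ℕ := fun i => if 0 < l i then 0 else if i = j then 1 else 2 with hkey
  set τ := Tuple.sort key with hτ
  have hmono : Monotone (key ∘ τ) := Tuple.monotone_sort key
  apply PQ_perm hn l (-1) j 0 τ
  apply target_refl
  set κ := τ.symm j with hκ
  have hκj : τ κ = j := by simp [hκ]
  have hkκ : key (τ κ) = 1 := by simp [hκj, hkey, hlj]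
  have hk : ∀ i : Fin n, 0 < l (τ i) ↔ (i : ℕ) < κ := by
    intro i
    constructor
    · intro h
      by_contra hcon
      have h1 : key (τ κ) ≤ key (τ i) := hmono (show κ ≤ i from not_lt.1 hcon)
      rw [hkκ] at h1
      simp [hkey, h] at h1
    · intro h
      have h1 : key (τ i) ≤ key (τ κ) := hmono (show i ≤ κ from h.le)
      rw [hkκ] at h1
      have hne : τ i ≠ j := by
        rw [← hκj]
        intro h2
        rw [τ.injective h2] at h
        omega
      by_contra hcon
      simp [hkey, hcon, hne] at h1
  have hsum : ∀ x : En n, ∑ i ∈ Finset.univ.filter (fun i : Fin n => (i : ℕ) < κ),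
      l (τ i) * x i ^ 2 = ∑ i, l (τ i) * x i ^ 2 := by
    intro x
    refine Finset.sum_subset (Finset.subset_univ _) fun i _ hi => ?_
    simp only [Finset.mem_filter, Finset.mem_univ, true_and] at hi
    rw [← hk] at hi
    have : l (τ i) = 0 := le_antisymm (not_lt.1 hi) (hl _)
    rw [this, zero_mul]
  by_cases h1 : 1 ≤ (κ : ℕ)
  · refine Or.inr (Or.inr (Or.inr (Or.inr ⟨κ, h1, fun i => l (τ i), fun i hi => (hk i).2 hi, ?_⟩)))
    ext x
    simp only [PQ, Set.mem_ofPred_eq]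
    rw [hsum]
    constructor <;> intro h <;> linarith
  · refine Or.inr (Or.inr (Or.inl ?_))
    have hκ0 : κ = ⟨0, by omega⟩ := Fin.ext (by simpa using h1)
    ext x
    simp only [PQ, Set.mem_ofPred_eq]
    rw [← hsum, Finset.sum_eq_zero, ← hκ0]
    · simp
    · intro i hi
      simp only [Finset.mem_filter, Finset.mem_univ, true_and] at hi
      omega

/-- Forward direction, with the sign normalised. -/
lemma forward_pos {n : ℕ} (hn : 2 ≤ n) (l : Fin n → ℝ) (β : ℝ) (j : Fin n) (c : ℝ)
    (hn0 : β = 0 ∨ (β ≠ 0 ∧ c = 0 ∧ l j = 0)) (hne : (PQ l β j c).Nonempty)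
    (U : Set (En n)) (hU : U ∈ componentsIn (PQ l β j c)ᶜ) (hconv : Convex ℝ U)
    (hpos : ∀ x ∈ U, 0 < qf l x + β * x j + c) : Target hn (PQ l β j c) := by
  obtain ⟨x, hx⟩ := comp_nonempty hU
  rcases hn0 with rfl | ⟨hβ, rfl, hlj⟩
  · have hS : ∀ x, x ∈ PQ l 0 j c ↔ qf l x + c = 0 := by
      intro x
      simp [PQ, qf]
    have hpos' : ∀ x ∈ U, 0 < qf l x + c := by
      intro x hx
      simpa using hpos x hx
    rcases le_or_gt c 0 with hc | hc
    · obtain ⟨i0, hi0⟩ : ∃ i, 0 < l i := by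
        by_contra hcon
        push Not at hcon
        have h1 := hpos' x hx
        have : qf l x ≤ 0 := Finset.sum_nonpos fun i _ =>
          mul_nonpos_of_nonpos_of_nonneg (hcon i) (sq_nonneg _)
        linarith
      have hl : ∀ i, i ≠ i0 → l i ≤ 0 := by
        intro i hi
        by_contra hcon
        exact central_nonpos l c hc hS hU hconv hpos' i i0 hi (not_le.1 hcon) hi0
      rcases hc.lt_or_eq with hc | rfl
      · have hd : 0 < (-c)⁻¹ := inv_pos.2 (by linarith)
        rw [← PQ_scale l 0 j c (-c)⁻¹ hd.ne']
        have := asm2 hn (fun i => (-c)⁻¹ * l i) j 1 (Or.inr rfl) i0 (mul_pos hd hi0)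
          (fun i hi => mul_nonpos_of_nonneg_of_nonpos hd.le (hl i hi))
        convert this using 2
        · simp
        · rw [inv_mul_eq_div, neg_eq_neg_one_mul, div_eq_iff (by linarith)]
          ring
      · have := asm2 hn l j 0 (Or.inl rfl) i0 hi0 hl
        simpa using this
    · obtain ⟨y, hy⟩ := hne
      rw [hS] at hy
      obtain ⟨i, hi⟩ : ∃ i, l i < 0 := by
        by_contra hcon
        push Not at hcon
        have : 0 ≤ qf l y := Finset.sum_nonneg fun i _ => mul_nonneg (hcon i) (sq_nonneg _)
        linarith
      have hl : ∀ k, l k ≤ 0 := by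
        intro k
        by_contra hcon
        exact central_pos l c hc hS hU hconv hpos' i k hi (not_le.1 hcon)
      have hd : (-c)⁻¹ < 0 := inv_lt_zero.2 (by linarith)
      rw [← PQ_scale l 0 j c (-c)⁻¹ hd.ne]
      have := asm1 hn (fun i => (-c)⁻¹ * l i) j
        (fun i => mul_nonneg_of_nonpos_of_nonpos hd.le (hl i)) ⟨i, mul_pos_of_neg_of_neg hd hi⟩
      convert this using 2
      · simp
      · field_simp
  · have hS : ∀ x, x ∈ PQ l β j 0 ↔ qf l x + β * x j = 0 := by
      intro x
      simp [PQ, qf]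
    have hpos' : ∀ x ∈ U, 0 < qf l x + β * x j := by
      intro x hx
      simpa using hpos x hx
    have hl : ∀ i, l i ≤ 0 := by
      intro i
      by_contra hcon
      exact parabolic l β hβ j hlj hS hU hconv hpos' i (not_le.1 hcon)
    have hb : 0 < |β|⁻¹ := inv_pos.2 (abs_pos.2 hβ)
    have hd : -|β|⁻¹ ≠ 0 := neg_ne_zero.2 hb.ne'
    have main := asm5 hn (fun i => -|β|⁻¹ * l i) j
      (fun i => mul_nonneg_of_nonpos_of_nonpos (by linarith) (hl i)) (by simp [hlj])
    rw [← PQ_scale l β j 0 (-|β|⁻¹) hd, mul_zero]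
    rcases lt_or_gt_of_ne hβ with h | h
    · apply PQ_neg
      convert main using 2
      rw [abs_of_neg h]
      field_simp
    · convert main using 2
      rw [abs_of_pos h]
      field_simp

lemma forward {n : ℕ} (hn : 2 ≤ n) (l : Fin n → ℝ) (β : ℝ) (j : Fin n) (c : ℝ)
    (hn0 : β = 0 ∨ (β ≠ 0 ∧ c = 0 ∧ l j = 0)) (hne : (PQ l β j c).Nonempty)
    (h : HasConv (PQ l β j c)) : Target hn (PQ l β j c) := by
  obtain ⟨U, hU, hconv⟩ := h
  have hcont : Continuous fun x : En n => qf l x + β * x j + c := by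
    have := qf_continuous l
    fun_prop
  have hcover : U ⊆ {x : En n | 0 < qf l x + β * x j + c} ∪
      {x : En n | qf l x + β * x j + c < 0} := by
    intro x hx
    have h1 : qf l x + β * x j + c ≠ 0 := comp_subset hU hx
    rcases lt_or_gt_of_ne h1 with h | h
    · exact Or.inr h
    · exact Or.inl h
  have ho1 : IsOpen {x : En n | 0 < qf l x + β * x j + c} := isOpen_lt continuous_const hcont
  have ho2 : IsOpen {x : En n | qf l x + β * x j + c < 0} := isOpen_lt hcont continuous_const
  have hdis : Disjoint {x : En n | 0 < qf l x + β * x j + c}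
      {x : En n | qf l x + β * x j + c < 0} := by
    rw [Set.disjoint_left]
    intro x h1 h2
    simp only [Set.mem_ofPred_eq] at h1 h2
    linarith
  obtain ⟨x, hx⟩ := comp_nonempty hU
  rcases hcover hx with h1 | h1
  · exact forward_pos hn l β j c hn0 hne U hU hconv fun y hy =>
      (comp_preconnected hU).subset_left_of_subset_union ho1 ho2 hdis hcover ⟨x, hx, h1⟩ hy
  · have hneg : ∀ y ∈ U, qf l y + β * y j + c < 0 := fun y hy =>
      (comp_preconnected hU).subset_right_of_subset_union ho1 ho2 hdis hcover ⟨x, hx, h1⟩ hy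
    have hsc := PQ_scale l β j c (-1) (by norm_num)
    rw [← hsc]
    rw [← hsc] at hU hne
    refine forward_pos hn _ _ j _ ?_ hne U hU hconv ?_
    · rcases hn0 with rfl | ⟨h1, h2, h3⟩
      · left; simp
      · right
        exact ⟨by simpa using h1, by simp [h2], by simp [h3]⟩
    · intro y hy
      have := hneg y hy
      have e : qf (fun i => -1 * l i) y = - qf l y := by
        simp [qf]
      rw [e]
      linarith

/-- Criterion for a convex component. -/
lemma hasConv_of_sep {n : ℕ} (S U V : Set (En n)) (hU : IsOpen U) (hV : IsOpen V)
    (hd : Disjoint U V) (hconv : Convex ℝ U) (hne : U.Nonempty) (hUS : U ⊆ Sᶜ)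
    (hcov : Sᶜ ⊆ U ∪ V) : HasConv S := by
  obtain ⟨x, hx⟩ := hne
  refine ⟨connectedComponentIn Sᶜ x, ⟨x, hUS hx, rfl⟩, ?_⟩
  have : connectedComponentIn Sᶜ x = U := by
    apply Set.Subset.antisymm
    · exact isPreconnected_connectedComponentIn.subset_left_of_subset_union hU hV hd
        ((connectedComponentIn_subset _ _).trans hcov)
        ⟨x, mem_connectedComponentIn (hUS hx), hx⟩
    · exact hconv.isPreconnected.subset_connectedComponentIn hx hUS
  rw [this]
  exact hconv

lemma hasConv_convex {n : ℕ} (F : Finset (Fin n)) (a : Fin n → ℝ) (ha : ∀ i ∈ F, 0 < a i)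
    (β : ℝ) (κ : Fin n) (c : ℝ) (hpt : ∃ x : En n, ∑ i ∈ F, a i * x i ^ 2 < β * x κ + c) :
    HasConv {x : En n | ∑ i ∈ F, a i * x i ^ 2 = β * x κ + c} := by
  refine hasConv_of_sep _ {x : En n | ∑ i ∈ F, a i * x i ^ 2 < β * x κ + c}
    {x : En n | β * x κ + c < ∑ i ∈ F, a i * x i ^ 2} (isOpen_lt (by fun_prop) (by fun_prop))
    (isOpen_lt (by fun_prop) (by fun_prop)) ?_ ?_ hpt ?_ ?_
  · rw [Set.disjoint_left]
    intro x h1 h2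
    simp only [Set.mem_ofPred_eq] at h1 h2
    linarith
  · intro x hx y hy s t hs ht hst
    simp only [Set.mem_ofPred_eq] at hx hy ⊢
    have h1 : ∑ i ∈ F, a i * (s • x + t • y) i ^ 2
        ≤ s * ∑ i ∈ F, a i * x i ^ 2 + t * ∑ i ∈ F, a i * y i ^ 2 := by
      rw [Finset.mul_sum, Finset.mul_sum, ← Finset.sum_add_distrib]
      refine Finset.sum_le_sum fun i hi => ?_
      simp only [PiLp.add_apply, PiLp.smul_apply, smul_eq_mul]
      have h2 : 0 ≤ a i * (s * t * (x i - y i) ^ 2) := by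
        have := (ha i hi).le
        positivity
      have hs' : s = 1 - t := by linarith
      subst hs'
      nlinarith
    refine lt_of_le_of_lt h1 ?_
    simp only [PiLp.add_apply, PiLp.smul_apply, smul_eq_mul]
    have e : β * (s * x κ + t * y κ) + c = s * (β * x κ + c) + t * (β * y κ + c) := by
      linear_combination c * (-hst)
    rw [e]
    rcases hs.lt_or_eq with h | h
    · have h3 := mul_lt_mul_of_pos_left hx h
      have h4 := mul_le_mul_of_nonneg_left hy.le ht
      linarith
    · have : t = 1 := by linarith
      subst this
      rw [← h]
      linarith
  · intro x hx hx2
    simp only [Set.mem_ofPred_eq] at hx hx2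
    linarith
  · intro x hx
    rcases lt_or_gt_of_ne (show ∑ i ∈ F, a i * x i ^ 2 ≠ β * x κ + c from hx) with h | h
    · exact Or.inl h
    · exact Or.inr h

lemma hasConv_cone {n : ℕ} (F : Finset (Fin n)) (z : Fin n) (hz : z ∉ F) (a : Fin n → ℝ)
    (ha : ∀ i ∈ F, 0 < a i) (haz : 0 < a z) (c : ℝ) (hc : 0 ≤ c) :
    HasConv {x : En n | a z * x z ^ 2 - ∑ i ∈ F, a i * x i ^ 2 = c} := by
  classical
  have hS0 : ∀ x : En n, 0 ≤ ∑ i ∈ F, a i * x i ^ 2 := fun x =>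
    Finset.sum_nonneg fun i hi => mul_nonneg (ha i hi).le (sq_nonneg _)
  refine hasConv_of_sep _ ({x : En n | 0 < x z} ∩ {x : En n | c + ∑ i ∈ F, a i * x i ^ 2
    < a z * x z ^ 2}) ({x : En n | x z < 0} ∪ {x : En n | a z * x z ^ 2
    < c + ∑ i ∈ F, a i * x i ^ 2})
    ((isOpen_lt (by fun_prop) (by fun_prop)).inter (isOpen_lt (by fun_prop) (by fun_prop)))
    ((isOpen_lt (by fun_prop) (by fun_prop)).union (isOpen_lt (by fun_prop) (by fun_prop)))
    ?_ ?_ ?_ ?_ ?_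
  · rw [Set.disjoint_left]
    rintro x ⟨h1, h2⟩ (h3 | h3) <;> simp only [Set.mem_ofPred_eq] at h1 h2 h3 <;> linarith
  · let N : En n → En n := fun x => WithLp.toLp 2 fun i =>
      if i ∈ F then Real.sqrt (a i) * x i else if i = z then Real.sqrt c else 0
    have hN : ∀ x, ‖N x‖ ^ 2 = c + ∑ i ∈ F, a i * x i ^ 2 := by
      intro x
      rw [EuclideanSpace.real_norm_sq_eq]
      have : ∀ i, (N x) i ^ 2 = (if i ∈ F then a i * x i ^ 2 else 0) + if i = z then c else 0 := by
        intro i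
        simp only [N]
        by_cases h1 : i ∈ F
        · have : i ≠ z := by rintro rfl; exact hz h1
          simp [h1, this, mul_pow, Real.sq_sqrt (ha i h1).le]
        · by_cases h2 : i = z
          · simp [h2, hz, Real.sq_sqrt hc]
          · simp [h1, h2]
      simp only [this, Finset.sum_add_distrib]
      simp
      ring
    have hiff : ∀ x : En n, (x ∈ ({x : En n | 0 < x z} ∩ {x : En n | c + ∑ i ∈ F, a i * x i ^ 2
        < a z * x z ^ 2})) ↔ ‖N x‖ < Real.sqrt (a z) * x z := by
      intro x
      have hsq : (Real.sqrt (a z) * x z) ^ 2 = a z * x z ^ 2 := by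
        rw [mul_pow, Real.sq_sqrt haz.le]
      have hsp := Real.sqrt_pos.2 haz
      constructor
      · rintro ⟨h1, h2⟩
        simp only [Set.mem_ofPred_eq] at h1 h2
        rw [← hN, ← hsq] at h2
        exact lt_of_pow_lt_pow_left₀ 2 (by positivity) h2
      · intro h
        have h1 : 0 < Real.sqrt (a z) * x z := lt_of_le_of_lt (norm_nonneg _) h
        refine ⟨(pos_iff_pos_of_mul_pos h1).1 hsp, ?_⟩
        simp only [Set.mem_ofPred_eq]
        rw [← hN, ← hsq]
        exact pow_lt_pow_left₀ h (norm_nonneg _) (by norm_num)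
    intro x hx y hy s t hs ht hst
    rw [hiff] at hx hy ⊢
    have e : N (s • x + t • y) = s • N x + t • N y := by
      ext i
      simp only [N, PiLp.add_apply, PiLp.smul_apply, smul_eq_mul]
      split_ifs
      · ring
      · linear_combination Real.sqrt c * (-hst)
      · ring
    rw [e]
    refine lt_of_le_of_lt (norm_add_le _ _) ?_
    rw [norm_smul, norm_smul, Real.norm_of_nonneg hs, Real.norm_of_nonneg ht]
    simp only [PiLp.add_apply, PiLp.smul_apply, smul_eq_mul]
    rcases hs.lt_or_eq with h | h
    · have h3 := mul_lt_mul_of_pos_left hx h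
      have h4 := mul_le_mul_of_nonneg_left hy.le ht
      linarith
    · have : t = 1 := by linarith
      subst this
      rw [← h]
      linarith
  · refine ⟨EuclideanSpace.single z (Real.sqrt ((c + 1) / a z)), ?_, ?_⟩
    · have : 0 < Real.sqrt ((c + 1) / a z) := Real.sqrt_pos.2 (by positivity)
      simpa using this
    · simp only [Set.mem_ofPred_eq]
      rw [Finset.sum_eq_zero]
      · have : (EuclideanSpace.single z (Real.sqrt ((c + 1) / a z)) : En n) z
          = Real.sqrt ((c + 1) / a z) := by simp
        rw [this, Real.sq_sqrt (by positivity), mul_div_cancel₀ _ haz.ne']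
        linarith
      · intro i hi
        have : i ≠ z := by rintro rfl; exact hz hi
        simp [this]
  · rintro x ⟨h1, h2⟩ h3
    simp only [Set.mem_ofPred_eq] at h1 h2 h3
    linarith
  · intro x hx
    have hx' : a z * x z ^ 2 - ∑ i ∈ F, a i * x i ^ 2 ≠ c := hx
    rcases lt_or_gt_of_ne hx' with h | h
    · right; right
      simp only [Set.mem_ofPred_eq]
      linarith
    · rcases lt_trichotomy (x z) 0 with h1 | h1 | h1
      · right; left; exact h1
      · exfalso
        have := hS0 x
        rw [h1] at h
        simp at h
        linarith
      · left
        refine ⟨h1, ?_⟩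
        simp only [Set.mem_ofPred_eq]
        linarith

lemma backward {n : ℕ} (hn : 2 ≤ n) (S : Set (En n)) (h : Canon hn S) : HasConv S := by
  rcases h with ⟨k, hk1, hkn, a, ha, rfl⟩ | ⟨k, hk1, hkn, a, ha, rfl⟩ | rfl |
    ⟨k, hk1, hkn, a, ha, rfl⟩ | ⟨κ, hκ, a, ha, rfl⟩
  · have := hasConv_convex (Finset.univ.filter (fun i : Fin n => (i : ℕ) < k)) a
      (by simpa using ha) 0 ⟨0, by omega⟩ 1 ⟨0, by simp⟩
    simpa using this
  · refine hasConv_cone (Finset.univ.filter (fun i : Fin n => 1 ≤ (i : ℕ) ∧ (i : ℕ) < k))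
      ⟨0, by omega⟩ (by simp) a ?_ (ha _ (by simp; omega)) 1 (by norm_num)
    intro i hi
    simp only [Finset.mem_filter, Finset.mem_univ, true_and] at hi
    exact ha i hi.2
  · have := hasConv_convex (∅ : Finset (Fin n)) (fun _ => 1) (by simp) 1 ⟨0, by omega⟩ 0
      ⟨EuclideanSpace.single ⟨0, by omega⟩ 1, by simp⟩
    simpa [eq_comm] using this
  · refine hasConv_cone (Finset.univ.filter (fun i : Fin n => 1 ≤ (i : ℕ) ∧ (i : ℕ) < k))
      ⟨0, by omega⟩ (by simp) a ?_ (ha _ (by simp; omega)) 0 le_rfl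
    intro i hi
    simp only [Finset.mem_filter, Finset.mem_univ, true_and] at hi
    exact ha i hi.2
  · have := hasConv_convex (Finset.univ.filter (fun i : Fin n => (i : ℕ) < κ)) a
      (by simpa using ha) 1 κ 0 ⟨EuclideanSpace.single κ 1, by
        rw [Finset.sum_eq_zero]
        · simp
        · intro i hi
          simp only [Finset.mem_filter, Finset.mem_univ, true_and] at hi
          have : i ≠ κ := by rintro rfl; omega
          simp [this]⟩
    simpa using this

/-- the complement of a real quadric surface Q ⊆ ℝⁿ (n ≥ 2) has a convex
connected component if and only if, in suitable Cartesian coordinates (i.e. after an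
affine isometry of ℝⁿ), Q takes one of the five canonical forms. -/
theorem quadric_complement_has_convex_component_iff
    {n : ℕ} (hn : 2 ≤ n) (Q : Set (En n)) (hQ : IsRealQuadricSurface Q) :
    (∃ U ∈ componentsIn Qᶜ, Convex ℝ U) ↔
      ∃ f : En n ≃ᵃⁱ[ℝ] En n,
        -- (1) a₁ξ₁² + ⋯ + a_kξ_k² = 1,  1 ≤ k ≤ n
        (∃ k : ℕ, 1 ≤ k ∧ k ≤ n ∧ ∃ a : Fin n → ℝ, (∀ i : Fin n, (i : ℕ) < k → 0 < a i) ∧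
          f '' Q = {x : En n |
            ∑ i ∈ Finset.univ.filter (fun i : Fin n => (i : ℕ) < k), a i * x i ^ 2 = 1}) ∨
        -- (2) a₁ξ₁² − a₂ξ₂² − ⋯ − a_kξ_k² = 1,  2 ≤ k ≤ n
        (∃ k : ℕ, 2 ≤ k ∧ k ≤ n ∧ ∃ a : Fin n → ℝ, (∀ i : Fin n, (i : ℕ) < k → 0 < a i) ∧
          f '' Q = {x : En n |
            a ⟨0, by omega⟩ * x ⟨0, by omega⟩ ^ 2 -
              ∑ i ∈ Finset.univ.filter (fun i : Fin n => 1 ≤ (i : ℕ) ∧ (i : ℕ) < k),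
                a i * x i ^ 2 = 1}) ∨
        -- (3) ξ₁ = 0
        (f '' Q = {x : En n | x ⟨0, by omega⟩ = 0}) ∨
        -- (4) a₁ξ₁² − a₂ξ₂² − ⋯ − a_kξ_k² = 0,  2 ≤ k ≤ n
        (∃ k : ℕ, 2 ≤ k ∧ k ≤ n ∧ ∃ a : Fin n → ℝ, (∀ i : Fin n, (i : ℕ) < k → 0 < a i) ∧
          f '' Q = {x : En n |
            a ⟨0, by omega⟩ * x ⟨0, by omega⟩ ^ 2 -
              ∑ i ∈ Finset.univ.filter (fun i : Fin n => 1 ≤ (i : ℕ) ∧ (i : ℕ) < k),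
                a i * x i ^ 2 = 0}) ∨
        -- (5) a₁ξ₁² + ⋯ + a_{k−1}ξ_{k−1}² = ξ_k,  2 ≤ k ≤ n  (here κ : Fin n is the index
        -- of ξ_k, so κ = k − 1 ≥ 1)
        (∃ κ : Fin n, 1 ≤ (κ : ℕ) ∧ ∃ a : Fin n → ℝ, (∀ i : Fin n, (i : ℕ) < (κ : ℕ) → 0 < a i) ∧
          f '' Q = {x : En n |
            ∑ i ∈ Finset.univ.filter (fun i : Fin n => (i : ℕ) < (κ : ℕ)), a i * x i ^ 2 = x κ}) := by
  change HasConv Q ↔ Target hn Q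
  constructor
  · intro h
    obtain ⟨g, l, β, j, c, hg, hcase⟩ := normal_form hn Q hQ.1
    apply target_of_image hn Q g
    have h2 := hasConv_image Q g h
    have hne : (g '' Q).Nonempty := hQ.2.image g
    rw [hg] at h2 hne ⊢
    exact forward hn l β j c hcase hne h2
  · rintro ⟨f, hf⟩
    exact hasConv_of_image Q f (backward hn _ hf)
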